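/- arXiv:1408.5377 — 6 statements merged into one kernel-verified Lean document; each statement's English description precedes it below -/
import Mathlib

section
/- Soundness of the Time-Table failure check for RobustCumulative (Proposition 1): If there exists a time t ∈ ℕ such that the sum of h a over all activities a ∈ A whose compulsory part contains t (i.e. smax a ≤ t < smin a + p a), plus the maximum of h a over all activities a ∈ A whose K-compulsory part contains t (this maximum taken as 0 when no such activity exists), is strictly greater than C, then no consistent assignment σ satisfies the RCuSP constraint. -/
/-!
Fix a consistent `σ` and a time `t`. An activity whose compulsory part contains `t` is running at
`t` under `σ`. An activity `b` whose K-compulsory part contains `t` has either ended by `t`, so that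
`t` lies in its slack window, or is still running; in the latter case `h b` is a summand of the load
of `σ` that the sum over the compulsory parts does not contain. Taking `b` to be a highest such
activity shows that the time-table load at `t` never exceeds the load of `σ` at `t`.
-/

namespace RCuSP

section Heights

variable {α M : Type*} [AddCommMonoid M]

theorem sum_add_le_sum_of_subset_of_mem_of_notMem [PartialOrder M] [CanonicallyOrderedAdd M]
    {S R : Finset α} {b : α} (h : α → M) (hSR : S ⊆ R) (hbR : b ∈ R) (hbS : b ∉ S) :
    ∑ a ∈ S, h a + h b ≤ ∑ a ∈ R, h a := by
  calc ∑ a ∈ S, h a + h b = ∑ a ∈ S.cons b hbS, h a := by rw [Finset.sum_cons, add_comm]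
    _ ≤ ∑ a ∈ R, h a := Finset.sum_le_sum_of_subset (Finset.cons_subset.2 ⟨hbR, hSR⟩)

theorem sum_add_sup_le_sum_add_sup [LinearOrder M] [CanonicallyOrderedAdd M] [OrderBot M]
    {S R K L : Finset α} (h : α → M) (hSR : S ⊆ R) (hSK : Disjoint S K)
    (hK : ∀ b ∈ K, b ∈ R ∨ b ∈ L) :
    ∑ a ∈ S, h a + K.sup h ≤ ∑ a ∈ R, h a + L.sup h := by
  have sum_le : ∑ a ∈ S, h a ≤ ∑ a ∈ R, h a := Finset.sum_le_sum_of_subset hSR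
  rcases K.eq_empty_or_nonempty with rfl | hne
  · exact add_le_add sum_le bot_le
  obtain ⟨b, hbK, hb⟩ := K.exists_mem_eq_sup hne h
  rw [hb]
  rcases hK b hbK with hbR | hbL
  · have hbS : b ∉ S := fun hbS ↦ Finset.disjoint_left.1 hSK hbS hbK
    exact (sum_add_le_sum_of_subset_of_mem_of_notMem h hSR hbR hbS).trans le_self_add
  · exact add_le_add sum_le (Finset.le_sup hbL)

end Heights

/-- `σ` is a consistent assignment: every activity of `A` starts within its domain. -/
def IsConsistent {α T : Type*} [LE T] (A : Finset α) (smin smax σ : α → T) : Prop :=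
  ∀ a ∈ A, smin a ≤ σ a ∧ σ a ≤ smax a

section Parts

variable {α T : Type*} [Add T] [LinearOrder T]

/-- The activities running at time `t` when started according to `σ`. -/
def runningAt (A : Finset α) (p σ : α → T) (t : T) : Finset α :=
  {a ∈ A | σ a ≤ t ∧ t < σ a + p a}

/-- The activities whose slack window under `σ` contains `t`: they have ended by `t`, but a delay of
at most their slack `k` can make them run at `t`. -/
def slackAt (A : Finset α) (p k σ : α → T) (t : T) : Finset α :=
  {b ∈ A | σ b + p b ≤ t ∧ t < σ b + p b + k b}

/-- The activities whose compulsory part contains `t`. -/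
def compulsoryAt (A : Finset α) (p smin smax : α → T) (t : T) : Finset α :=
  {a ∈ A | smax a ≤ t ∧ t < smin a + p a}

/-- The activities whose K-compulsory part contains `t`. -/
def kCompulsoryAt (A : Finset α) (p k smin smax : α → T) (t : T) : Finset α :=
  {a ∈ A | max (smax a) (smin a + p a) ≤ t ∧ t < smin a + p a + k a}

variable {A : Finset α} {p k smin smax σ : α → T} {t : T}

theorem disjoint_compulsoryAt_kCompulsoryAt :
    Disjoint (compulsoryAt A p smin smax t) (kCompulsoryAt A p k smin smax t) :=
  Finset.disjoint_filter.2 fun _ _ hcomp hkcomp ↦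
    hcomp.2.not_ge ((le_max_right _ _).trans hkcomp.1)

variable [AddRightMono T]

theorem IsConsistent.compulsoryAt_subset_runningAt (hσ : IsConsistent A smin smax σ) :
    compulsoryAt A p smin smax t ⊆ runningAt A p σ t := by
  intro a ha
  obtain ⟨haA, hstart, hend⟩ := Finset.mem_filter.1 ha
  obtain ⟨hmin, hmax⟩ := hσ a haA
  have hrun : t < σ a + p a := hend.trans_le (by gcongr)
  exact Finset.mem_filter.2 ⟨haA, hmax.trans hstart, hrun⟩

theorem IsConsistent.mem_runningAt_or_mem_slackAt (hσ : IsConsistent A smin smax σ) {b : α}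
    (hb : b ∈ kCompulsoryAt A p k smin smax t) : b ∈ runningAt A p σ t ∨ b ∈ slackAt A p k σ t := by
  obtain ⟨hbA, hstart, hend⟩ := Finset.mem_filter.1 hb
  obtain ⟨hmin, hmax⟩ := hσ b hbA
  rcases lt_or_ge t (σ b + p b) with hrun | hdone
  · have hstarted : σ b ≤ t := hmax.trans ((le_max_left _ _).trans hstart)
    exact .inl (Finset.mem_filter.2 ⟨hbA, hstarted, hrun⟩)
  · have hslack : t < σ b + p b + k b := hend.trans_le (by gcongr)
    exact .inr (Finset.mem_filter.2 ⟨hbA, hdone, hslack⟩)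

end Parts

section Loads

variable {α T M : Type*} [Add T] [LinearOrder T] [AddCommMonoid M] [LinearOrder M] [OrderBot M]

/-- The resource usage at time `t` that the RCuSP constraint bounds: the running activities plus
the highest activity in its slack window. `Finset.sup` is `⊥` when there is none, which is `0` in a
canonically ordered monoid such as `ℕ`. -/
def robustLoad (A : Finset α) (p : α → T) (h : α → M) (k σ : α → T) (t : T) : M :=
  ∑ a ∈ runningAt A p σ t, h a + (slackAt A p k σ t).sup h

/-- The resource usage at time `t` that the Time-Table check compares with the capacity; it depends
on the start-time domains only. -/
def timeTableLoad (A : Finset α) (p : α → T) (h : α → M) (k smin smax : α → T) (t : T) : M :=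
  ∑ a ∈ compulsoryAt A p smin smax t, h a + (kCompulsoryAt A p k smin smax t).sup h

/-- The RCuSP constraint, that is, RobustCumulative with `r = 1`. -/
def RobustCumulative (A : Finset α) (p : α → T) (h : α → M) (k : α → T) (C : M) (σ : α → T) :
    Prop :=
  ∀ t, robustLoad A p h k σ t ≤ C

theorem IsConsistent.timeTableLoad_le_robustLoad [AddRightMono T] [CanonicallyOrderedAdd M]
    {A : Finset α} {smin smax σ : α → T} (hσ : IsConsistent A smin smax σ)
    (p : α → T) (h : α → M) (k : α → T) (t : T) :
    timeTableLoad A p h k smin smax t ≤ robustLoad A p h k σ t :=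
  sum_add_sup_le_sum_add_sup h hσ.compulsoryAt_subset_runningAt
    disjoint_compulsoryAt_kCompulsoryAt fun _ ↦ hσ.mem_runningAt_or_mem_slackAt

end Loads

end RCuSP

open RCuSP in
theorem rcusp_time_table_failure_check_general {α T M : Type*} [Add T] [LinearOrder T]
    [AddRightMono T] [AddCommMonoid M] [LinearOrder M] [CanonicallyOrderedAdd M] [OrderBot M]
    {A : Finset α} {p k smin smax σ : α → T} {h : α → M} {C : M}
    (hfail : ∃ t, C < timeTableLoad A p h k smin smax t)
    (hσ : IsConsistent A smin smax σ) : ¬ RobustCumulative A p h k C σ := by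
  intro hrobust
  obtain ⟨t, ht⟩ := hfail
  exact ht.not_ge ((hσ.timeTableLoad_le_robustLoad p h k t).trans (hrobust t))

/-- Soundness of the Time-Table failure check for RobustCumulative (Proposition 1):
if at some time `t` the sum of the heights of the activities whose compulsory part
contains `t`, plus the maximum height among activities whose K-compulsory part
contains `t` (`Finset.sup`, which is `0` on the empty set), exceeds `C`, then no
consistent assignment satisfies the RCuSP constraint. -/
theorem rcusp_time_table_failure_check
    {α : Type*} (A : Finset α) (p h k smin smax : α → ℕ) (C : ℕ)
    (hp : ∀ a ∈ A, 0 < p a) (hh : ∀ a ∈ A, 0 < h a)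
    (hdom : ∀ a ∈ A, smin a ≤ smax a)
    (hfail : ∃ t : ℕ,
      (∑ a ∈ A.filter (fun a => smax a ≤ t ∧ t < smin a + p a), h a)
        + (A.filter (fun a =>
            max (smax a) (smin a + p a) ≤ t ∧ t < smin a + p a + k a)).sup h
        > C) :
    ∀ σ : α → ℕ,
      (∀ a ∈ A, smin a ≤ σ a ∧ σ a ≤ smax a) →
      ¬ (∀ t : ℕ,
          (∑ a ∈ A.filter (fun a => σ a ≤ t ∧ t < σ a + p a), h a)
            + (A.filter (fun b => σ b + p b ≤ t ∧ t < σ b + p b + k b)).sup h ≤ C) :=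
  fun _ hσ ↦ rcusp_time_table_failure_check_general hfail hσ
end

section
/- Soundness of the Time-Table failure check for Cumulative: If there exists a time t ∈ ℕ such that the sum of h a over all activities a ∈ A whose compulsory part contains t (i.e. smax a ≤ t < smin a + p a) is strictly greater than C, then no consistent assignment σ satisfies the cumulative constraint. -/
section TimeTable

variable {α T M : Type*} [Preorder T] [Add T] [AddRightMono T]

/-- The compulsory part of an activity of duration `p` whose start time ranges over `[smin, smax]`:
it runs from its latest start to its earliest completion, and is empty if these come in the wrong
order. Reducible, so that membership inherits decidability from `Set.Ico`. -/
abbrev compulsoryPart (smin smax p : T) : Set T := Set.Ico smax (smin + p)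

theorem compulsoryPart_subset_Ico {smin smax s : T} (hs : s ∈ Set.Icc smin smax) (p : T) :
    compulsoryPart smin smax p ⊆ Set.Ico s (s + p) :=
  Set.Ico_subset_Ico hs.2 (add_le_add_left hs.1 p)

variable [DecidableLE T] [DecidableLT T]
  [AddCommMonoid M] [Preorder M] [AddLeftMono M]
  {A : Finset α} {p smin smax σ : α → T} {h : α → M}

theorem sum_compulsoryPart_le_sum_Ico (hh : ∀ a ∈ A, 0 ≤ h a)
    (hσ : ∀ a ∈ A, σ a ∈ Set.Icc (smin a) (smax a)) (t : T) :
    ∑ a ∈ A with t ∈ compulsoryPart (smin a) (smax a) (p a), h a ≤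
      ∑ a ∈ A with t ∈ Set.Ico (σ a) (σ a + p a), h a := by
  refine Finset.sum_le_sum_of_subset_of_nonneg ?_ fun a ha _ ↦ hh a (Finset.mem_filter.mp ha).1
  intro a ha
  obtain ⟨haA, hat⟩ := Finset.mem_filter.mp ha
  exact Finset.mem_filter.mpr ⟨haA, compulsoryPart_subset_Ico (hσ a haA) (p a) hat⟩

theorem cumulative_time_table_failure_check_general {C : M} (hh : ∀ a ∈ A, 0 ≤ h a)
    (hfail : ∃ t, C < ∑ a ∈ A with t ∈ compulsoryPart (smin a) (smax a) (p a), h a)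
    (hσ : ∀ a ∈ A, σ a ∈ Set.Icc (smin a) (smax a)) :
    ¬ ∀ t, ∑ a ∈ A with t ∈ Set.Ico (σ a) (σ a + p a), h a ≤ C := by
  obtain ⟨t, ht⟩ := hfail
  intro hcum
  exact (ht.trans_le (sum_compulsoryPart_le_sum_Ico hh hσ t)).not_ge (hcum t)

end TimeTable

/-- Soundness of the Time-Table failure check for Cumulative:
if at some time `t` the sum of the heights of the activities whose compulsory part
contains `t` exceeds `C`, then no consistent assignment satisfies the cumulative
constraint. -/
theorem cumulative_time_table_failure_check
    {α : Type*} (A : Finset α) (p h smin smax : α → ℕ) (C : ℕ)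
    (hp : ∀ a ∈ A, 0 < p a) (hh : ∀ a ∈ A, 0 < h a)
    (hdom : ∀ a ∈ A, smin a ≤ smax a)
    (hfail : ∃ t : ℕ,
      (∑ a ∈ A.filter (fun a => smax a ≤ t ∧ t < smin a + p a), h a) > C) :
    ∀ σ : α → ℕ,
      (∀ a ∈ A, smin a ≤ σ a ∧ σ a ≤ smax a) →
      ¬ (∀ t : ℕ,
          (∑ a ∈ A.filter (fun a => σ a ≤ t ∧ t < σ a + p a), h a) ≤ C) :=
  fun _ hσ ↦ cumulative_time_table_failure_check_general (fun a ha ↦ (hh a ha).le) hfail hσ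
end

section
/- Soundness of lower-bound pruning, condition (1) of Property 2: Let b ∈ A. If there exists a time t with smin b ≤ t < smin b + p b such that h b, plus the sum of h a over all a ∈ A with a ≠ b whose compulsory part contains t (smax a ≤ t < smin a + p a), plus the maximum of h a over all a ∈ A whose K-compulsory part contains t (taken as 0 when no such a exists), is strictly greater than C, then no consistent assignment σ with σ b = smin b satisfies the RCuSP constraint. -/
/-!
At time `t` the activities with a compulsory part at `t` are all running, and so is `b`. An
activity whose K-compulsory part contains `t` is none of these, since its earliest end is at most
`t`; it is either in its slack, where the maximum in the constraint dominates its height, or still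
running, where its height is a further summand of the load.
-/

theorem sum_add_sup_le_of_subset_union {α M : Type*} [DecidableEq α]
    [AddCommMonoid M] [SemilatticeSup M] [OrderBot M] [IsOrderedAddMonoid M]
    [CanonicallyOrderedAdd M] {S K R L : Finset α} (h : α → M)
    (hSR : S ⊆ R) (hSK : Disjoint S K) (hK : K ⊆ R ∪ L) :
    ∑ a ∈ S, h a + K.sup h ≤ ∑ a ∈ R, h a + L.sup h := by
  have hsup : K.sup h ≤ ∑ a ∈ R \ S, h a + L.sup h := by
    refine Finset.sup_le fun m hm ↦ ?_
    rcases Finset.mem_union.1 (hK hm) with hmR | hmL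
    · have hmRS : m ∈ R \ S := Finset.mem_sdiff.2 ⟨hmR, Finset.disjoint_right.1 hSK hm⟩
      exact (Finset.single_le_sum_of_canonicallyOrdered hmRS).trans le_self_add
    · exact (Finset.le_sup hmL).trans le_add_self
  calc ∑ a ∈ S, h a + K.sup h
      ≤ ∑ a ∈ S, h a + (∑ a ∈ R \ S, h a + L.sup h) := by gcongr
    _ = ∑ a ∈ R, h a + L.sup h := by
      rw [← add_assoc, add_comm (∑ a ∈ S, h a), Finset.sum_sdiff hSR]

section Schedule

variable {α T M : Type*} [LinearOrder T]

/-- The assignment `σ` of start times is consistent with the domains `[smin a, smax a]`. -/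
def IsConsistentSchedule (A : Finset α) (smin smax σ : α → T) : Prop :=
  ∀ a ∈ A, smin a ≤ σ a ∧ σ a ≤ smax a

variable [Add T]

/-- The activities running at time `t` under `σ`, activity `a` occupying the half-open interval
`[σ a, σ a + p a)`. -/
def runningAt (A : Finset α) (p σ : α → T) (t : T) : Finset α :=
  {a ∈ A | σ a ≤ t ∧ t < σ a + p a}

/-- The activities in their slack at time `t` under `σ`: those scheduled to end by `t` that could
still be running at `t` if delayed, the slack `k a` bounding the delay of `a`. -/
def inSlackAt (A : Finset α) (p k σ : α → T) (t : T) : Finset α :=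
  {a ∈ A | σ a + p a ≤ t ∧ t < σ a + p a + k a}

/-- The activities whose compulsory part `[smax a, smin a + p a)` contains `t`. -/
def compulsoryAt (A : Finset α) (p smin smax : α → T) (t : T) : Finset α :=
  {a ∈ A | smax a ≤ t ∧ t < smin a + p a}

/-- The activities whose K-compulsory part `[max (smax a) (smin a + p a), smin a + p a + k a)`
contains `t`. -/
def kCompulsoryAt (A : Finset α) (p k smin smax : α → T) (t : T) : Finset α :=
  {a ∈ A | max (smax a) (smin a + p a) ≤ t ∧ t < smin a + p a + k a}

/-- The quantity that the RCuSP constraint bounds by the capacity at time `t`: the heights of the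
running activities, plus the largest height of an activity in its slack. The supremum of an empty
set is `⊥`, which is `0` for canonically ordered heights. -/
def robustLoad [AddCommMonoid M] [SemilatticeSup M] [OrderBot M]
    (A : Finset α) (p : α → T) (h : α → M) (k σ : α → T) (t : T) : M :=
  ∑ a ∈ runningAt A p σ t, h a + (inSlackAt A p k σ t).sup h

variable {A : Finset α} {p k smin smax σ : α → T} {t : T} {b : α}

theorem earliestEnd_le_of_mem_kCompulsoryAt (hb : b ∈ kCompulsoryAt A p k smin smax t) :
    smin b + p b ≤ t :=
  (max_le_iff.1 (Finset.mem_filter.1 hb).2.1).2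

theorem disjoint_compulsoryAt_kCompulsoryAt {B : Finset α} :
    Disjoint (compulsoryAt B p smin smax t) (kCompulsoryAt A p k smin smax t) :=
  Finset.disjoint_left.2 fun _ hC hK ↦
    (Finset.mem_filter.1 hC).2.2.not_ge (earliestEnd_le_of_mem_kCompulsoryAt hK)

variable [AddRightMono T]

namespace IsConsistentSchedule

theorem mem_runningAt (hσ : IsConsistentSchedule A smin smax σ) (hb : b ∈ A) (hσt : σ b ≤ t)
    (ht : t < smin b + p b) : b ∈ runningAt A p σ t := by
  have hstart : smin b ≤ σ b := (hσ b hb).1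
  exact Finset.mem_filter.2 ⟨hb, hσt, ht.trans_le (by gcongr)⟩

theorem compulsoryAt_subset_runningAt (hσ : IsConsistentSchedule A smin smax σ) :
    compulsoryAt A p smin smax t ⊆ runningAt A p σ t := by
  intro a ha
  obtain ⟨haA, hsmax, hend⟩ := Finset.mem_filter.1 ha
  exact hσ.mem_runningAt haA ((hσ a haA).2.trans hsmax) hend

theorem kCompulsoryAt_subset_runningAt_union_inSlackAt [DecidableEq α]
    (hσ : IsConsistentSchedule A smin smax σ) :
    kCompulsoryAt A p k smin smax t ⊆ runningAt A p σ t ∪ inSlackAt A p k σ t := by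
  intro a ha
  obtain ⟨haA, hmax, hend⟩ := Finset.mem_filter.1 ha
  obtain ⟨hstart, hσmax⟩ := hσ a haA
  have hσt : σ a ≤ t := hσmax.trans ((le_max_left _ _).trans hmax)
  rcases lt_or_ge t (σ a + p a) with hrun | hslack
  · exact Finset.mem_union_left _ (Finset.mem_filter.2 ⟨haA, hσt, hrun⟩)
  · have hend' : t < σ a + p a + k a := hend.trans_le (by gcongr)
    exact Finset.mem_union_right _ (Finset.mem_filter.2 ⟨haA, hslack, hend'⟩)

end IsConsistentSchedule

theorem rcusp_lower_bound_pruning_cond1_general [DecidableEq α]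
    [AddCommMonoid M] [SemilatticeSup M] [OrderBot M] [IsOrderedAddMonoid M]
    [CanonicallyOrderedAdd M] {h : α → M} {C : M}
    (hσ : IsConsistentSchedule A smin smax σ) (hb : b ∈ A) (hσt : σ b ≤ t)
    (ht : t < smin b + p b)
    (hfail : C < h b + ∑ a ∈ compulsoryAt (A.erase b) p smin smax t, h a
      + (kCompulsoryAt A p k smin smax t).sup h) :
    C < robustLoad A p h k σ t := by
  have hbS : b ∉ compulsoryAt (A.erase b) p smin smax t := by simp [compulsoryAt]
  have hrun : insert b (compulsoryAt (A.erase b) p smin smax t) ⊆ runningAt A p σ t :=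
    Finset.insert_subset (hσ.mem_runningAt hb hσt ht)
      ((Finset.filter_subset_filter _ (A.erase_subset b)).trans hσ.compulsoryAt_subset_runningAt)
  have hdisj : Disjoint (insert b (compulsoryAt (A.erase b) p smin smax t))
      (kCompulsoryAt A p k smin smax t) :=
    Finset.disjoint_insert_left.2
      ⟨fun hbK ↦ ht.not_ge (earliestEnd_le_of_mem_kCompulsoryAt hbK),
        disjoint_compulsoryAt_kCompulsoryAt⟩
  rw [← Finset.sum_insert hbS] at hfail
  exact hfail.trans_le (sum_add_sup_le_of_subset_union h hrun hdisj
    hσ.kCompulsoryAt_subset_runningAt_union_inSlackAt)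

end Schedule

/-- Soundness of lower-bound pruning, condition (1) of Property 2: if at some
time `t ∈ [smin b, smin b + p b)` the height of `b`, plus the sum of the heights
of the other activities whose compulsory part contains `t`, plus the maximum
height among activities whose K-compulsory part contains `t` (`0` if none),
exceeds `C`, then no consistent assignment scheduling `b` at `smin b` satisfies
the RCuSP constraint. -/
theorem rcusp_lower_bound_pruning_cond1
    {α : Type*} [DecidableEq α] (A : Finset α) (p h k smin smax : α → ℕ) (C : ℕ)
    (hp : ∀ a ∈ A, 0 < p a) (hh : ∀ a ∈ A, 0 < h a)
    (hdom : ∀ a ∈ A, smin a ≤ smax a)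
    (b : α) (hb : b ∈ A)
    (hfail : ∃ t : ℕ, smin b ≤ t ∧ t < smin b + p b ∧
      h b
        + (∑ a ∈ A.filter (fun a => a ≠ b ∧ smax a ≤ t ∧ t < smin a + p a), h a)
        + (A.filter (fun a =>
            max (smax a) (smin a + p a) ≤ t ∧ t < smin a + p a + k a)).sup h
        > C) :
    ∀ σ : α → ℕ,
      (∀ a ∈ A, smin a ≤ σ a ∧ σ a ≤ smax a) →
      σ b = smin b →
      ¬ (∀ t : ℕ,
          (∑ a ∈ A.filter (fun a => σ a ≤ t ∧ t < σ a + p a), h a)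
            + (A.filter (fun c => σ c + p c ≤ t ∧ t < σ c + p c + k c)).sup h ≤ C) := by
  intro σ hσ hσb hC
  obtain ⟨t, hbt, htb, hgt⟩ := hfail
  refine (hC t).not_gt (rcusp_lower_bound_pruning_cond1_general hσ hb (hσb.trans_le hbt) htb ?_)
  simpa only [compulsoryAt, kCompulsoryAt, ← Finset.filter_ne', Finset.filter_filter] using hgt
end

section
/- Dominance of the naive duration-extension approach: If an assignment σ : A → ℕ satisfies the cumulative constraint for the instance in which every activity a has duration p a + k a (i.e. for every t ∈ ℕ, the sum of h a over all a ∈ A with σ a ≤ t < σ a + p a + k a is at most C), then σ satisfies the RCuSP constraint with durations p and slacks k. -/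
/-!
Once its slack is appended, activity `a` occupies `[σ a, σ a + p a + k a)`, which its nominal end
cuts into the execution interval and the slack window. At each time the load of the extended
instance is therefore the nominal load plus the sum of the heights of all activities in their slack
window, and RCuSP charges only the largest of these heights.
-/

section Active

variable {α T M : Type*}

section LinearOrder

variable [LinearOrder T]

/-- The activities of `A` in progress at time `t`, when activity `a` occupies the half-open
interval `[s a, e a)`. Taking start times for `s` gives the running activities; taking nominal ends
for `s` and delayed ends for `e` gives those in their slack window. -/
def active (A : Finset α) (s e : α → T) (t : T) : Finset α :=
  {a ∈ A | s a ≤ t ∧ t < e a}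

theorem disjoint_active (A : Finset α) (s m e : α → T) (t : T) :
    Disjoint (active A s m t) (active A m e t) :=
  Finset.disjoint_filter.2 fun _ _ hsm hme => hme.1.not_gt hsm.2

theorem active_union_active [DecidableEq α] {A : Finset α} {s m e : α → T}
    (hsm : ∀ a ∈ A, s a ≤ m a) (hme : ∀ a ∈ A, m a ≤ e a) (t : T) :
    active A s m t ∪ active A m e t = active A s e t := by
  rw [active, active, active, ← Finset.filter_or]
  refine Finset.filter_congr fun a ha => ?_
  simp only [← Set.mem_Ico, ← Set.mem_union,
    Set.Ico_union_Ico_eq_Ico (hsm a ha) (hme a ha)]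

theorem sum_active_add_sum_active [AddCommMonoid M] {A : Finset α} {s m e : α → T}
    (hsm : ∀ a ∈ A, s a ≤ m a) (hme : ∀ a ∈ A, m a ≤ e a) (h : α → M) (t : T) :
    ∑ a ∈ active A s m t, h a + ∑ a ∈ active A m e t, h a = ∑ a ∈ active A s e t, h a := by
  classical
  rw [← Finset.sum_union (disjoint_active A s m e t), active_union_active hsm hme]

end LinearOrder

section Height

variable [AddCommMonoid M] [SemilatticeSup M] [OrderBot M] [CanonicallyOrderedAdd M]

theorem finset_sup_le_sum (B : Finset α) (h : α → M) : B.sup h ≤ ∑ b ∈ B, h b :=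
  Finset.sup_le fun _ => Finset.single_le_sum_of_canonicallyOrdered

theorem sum_active_add_sup_active_le [LinearOrder T] {A : Finset α} {s m e : α → T}
    (hsm : ∀ a ∈ A, s a ≤ m a) (hme : ∀ a ∈ A, m a ≤ e a) (h : α → M) (t : T) :
    ∑ a ∈ active A s m t, h a + (active A m e t).sup h ≤ ∑ a ∈ active A s e t, h a :=
  calc ∑ a ∈ active A s m t, h a + (active A m e t).sup h
    _ ≤ ∑ a ∈ active A s m t, h a + ∑ a ∈ active A m e t, h a := by
      gcongr
      exact finset_sup_le_sum _ h
    _ = ∑ a ∈ active A s e t, h a := sum_active_add_sum_active hsm hme h t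

theorem naive_extension_dominates_rcusp_general
    [AddCommMonoid T] [LinearOrder T] [IsOrderedAddMonoid T]
    (A : Finset α) (p k : α → T) (h : α → M) (C : M)
    (hp : ∀ a ∈ A, 0 ≤ p a) (hk : ∀ a ∈ A, 0 ≤ k a) (σ : α → T)
    (hnaive : ∀ t, ∑ a ∈ active A σ (σ + p + k) t, h a ≤ C) (t : T) :
    ∑ a ∈ active A σ (σ + p) t, h a + (active A (σ + p) (σ + p + k) t).sup h ≤ C :=
  (sum_active_add_sup_active_le (fun a ha => le_add_of_nonneg_right (hp a ha))
    (fun a ha => le_add_of_nonneg_right (hk a ha)) h t).trans (hnaive t)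

end Height

end Active

/-- Dominance of the naive duration-extension approach: if `σ` satisfies the
cumulative constraint for the instance where every activity `a` has duration
`p a + k a`, then `σ` satisfies the RCuSP constraint with durations `p` and
slacks `k`. -/
theorem naive_extension_dominates_rcusp
    {α : Type*} (A : Finset α) (p h k : α → ℕ) (C : ℕ)
    (hp : ∀ a ∈ A, 0 < p a) (hh : ∀ a ∈ A, 0 < h a)
    (σ : α → ℕ)
    (hnaive : ∀ t : ℕ,
      (∑ a ∈ A.filter (fun a => σ a ≤ t ∧ t < σ a + p a + k a), h a) ≤ C) :
    ∀ t : ℕ,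
      (∑ a ∈ A.filter (fun a => σ a ≤ t ∧ t < σ a + p a), h a)
        + (A.filter (fun b => σ b + p b ≤ t ∧ t < σ b + p b + k b)).sup h ≤ C :=
  naive_extension_dominates_rcusp_general A p k h C (fun a _ => Nat.zero_le (p a))
    (fun a _ => Nat.zero_le (k a)) σ hnaive
end

section
/- Robustness semantics of RCuSP (absorption of one delay): If an assignment σ : A → ℕ satisfies the RCuSP constraint, then for every activity b ∈ A and every delay d ∈ ℕ with d ≤ k b, the schedule in which b has duration p b + d and every other activity a keeps duration p a satisfies the cumulative constraint: for every t ∈ ℕ, the sum of h a over all a ∈ A executing at t under the modified durations is at most C. -/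
/-!
Extending the duration of an activity by `d` adds to its execution window exactly the part
`[σ + p, σ + p + d)`, which lies in its slack window as soon as `d ≤ k`. If a single activity is
delayed, the extra load at any time is thus at most its height, and it is nonzero only when that
height takes part in the maximum that the RCuSP constraint keeps in reserve.
-/

section Cumulative

variable {α T M : Type*}

/-- The activities of `A` executing at time `t` when each `a` occupies `[σ a, σ a + p a)`. With
start times `σ + p` and durations `k` these are the activities in their slack window at `t`. -/
def executing [LinearOrder T] [Add T] (A : Finset α) (σ p : α → T) (t : T) : Finset α :=
  {a ∈ A | σ a ≤ t ∧ t < σ a + p a}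

theorem mem_executing [LinearOrder T] [Add T] {A : Finset α} {σ p : α → T} {t : T} {a : α} :
    a ∈ executing A σ p t ↔ a ∈ A ∧ σ a ≤ t ∧ t < σ a + p a :=
  Finset.mem_filter

theorem executing_add_subset_union [DecidableEq α] [LinearOrder T] [AddSemigroup T]
    (A : Finset α) (σ p δ : α → T) (t : T) :
    executing A σ (p + δ) t ⊆ executing A σ p t ∪ executing A (σ + p) δ t := by
  intro a ha
  simp only [Finset.mem_union, mem_executing, Pi.add_apply, add_assoc] at ha ⊢
  obtain ⟨haA, hstart, hend⟩ := ha
  exact (lt_or_ge t (σ a + p a)).imp (⟨haA, hstart, ·⟩) (⟨haA, ·, hend⟩)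

theorem executing_single_subset [DecidableEq α] [LinearOrder T] [AddMonoid T] (A : Finset α)
    (σ : α → T) (b : α) (d t : T) : executing A σ (Pi.single b d) t ⊆ {b} := by
  intro a ha
  obtain ⟨-, hstart, hend⟩ := mem_executing.mp ha
  rw [Finset.mem_singleton]
  by_contra hab
  rw [Pi.single_eq_of_ne hab, add_zero] at hend
  exact hend.not_ge hstart

theorem executing_single_subset_of_le [DecidableEq α] [LinearOrder T] [AddMonoid T]
    [AddLeftMono T] (A : Finset α) (σ : α → T) {k : α → T} {b : α} {d : T} (hd : d ≤ k b) (t : T) :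
    executing A σ (Pi.single b d) t ⊆ executing A σ k t := by
  intro a ha
  obtain rfl := Finset.mem_singleton.mp (executing_single_subset A σ b d t ha)
  obtain ⟨haA, hstart, hend⟩ := mem_executing.mp ha
  rw [Pi.single_eq_same] at hend
  exact mem_executing.mpr ⟨haA, hstart, hend.trans_le (by gcongr)⟩

theorem sum_le_sup_of_subset_singleton [AddCommMonoid M] [SemilatticeSup M] [OrderBot M]
    [CanonicallyOrderedAdd M] {s : Finset α} {b : α} (hs : s ⊆ {b}) (h : α → M) :
    ∑ a ∈ s, h a ≤ s.sup h := by
  obtain rfl | rfl := Finset.subset_singleton_iff.mp hs <;> simp [bot_eq_zero]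

theorem sum_executing_add_le [LinearOrder T] [AddSemigroup T] [AddCommMonoid M] [PartialOrder M]
    [CanonicallyOrderedAdd M] (A : Finset α) (σ p δ : α → T) (h : α → M) (t : T) :
    ∑ a ∈ executing A σ (p + δ) t, h a ≤
      ∑ a ∈ executing A σ p t, h a + ∑ a ∈ executing A (σ + p) δ t, h a := by
  classical
  calc
    _ ≤ ∑ a ∈ executing A σ p t ∪ executing A (σ + p) δ t, h a :=
      Finset.sum_le_sum_of_subset (executing_add_subset_union A σ p δ t)
    _ ≤ ∑ a ∈ executing A σ p t, h a + ∑ a ∈ executing A (σ + p) δ t, h a := by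
      rw [← Finset.sum_union_inter]
      exact le_self_add

theorem sum_executing_single_le_sup [DecidableEq α] [LinearOrder T] [AddMonoid T] [AddLeftMono T]
    [AddCommMonoid M] [SemilatticeSup M] [OrderBot M] [CanonicallyOrderedAdd M] (A : Finset α)
    (σ : α → T) {k : α → T} {b : α} {d : T} (hd : d ≤ k b) (h : α → M) (t : T) :
    ∑ a ∈ executing A σ (Pi.single b d) t, h a ≤ (executing A σ k t).sup h :=
  (sum_le_sup_of_subset_singleton (executing_single_subset A σ b d t) h).trans
    (Finset.sup_mono (executing_single_subset_of_le A σ hd t))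

/-- The cumulative constraint with start times `σ`, durations `p`, heights `h` and capacity `C`. -/
def IsCumulative [LinearOrder T] [Add T] [AddCommMonoid M] [LE M] (A : Finset α) (σ p : α → T)
    (h : α → M) (C : M) : Prop :=
  ∀ t, ∑ a ∈ executing A σ p t, h a ≤ C

/-- The RCuSP constraint with slacks `k`: besides the executing activities, the capacity
accommodates the highest activity in its slack window. If there is none, the supremum is `⊥`, which
is `0` in a canonically ordered `M`. -/
def IsRobustCumulative [LinearOrder T] [Add T] [AddCommMonoid M] [SemilatticeSup M] [OrderBot M]
    (A : Finset α) (σ p k : α → T) (h : α → M) (C : M) : Prop :=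
  ∀ t, ∑ a ∈ executing A σ p t, h a + (executing A (σ + p) k t).sup h ≤ C

theorem rcusp_absorbs_one_delay_general [DecidableEq α] [LinearOrder T] [AddMonoid T]
    [AddLeftMono T] [AddCommMonoid M] [SemilatticeSup M] [OrderBot M] [CanonicallyOrderedAdd M]
    {A : Finset α} {σ p k : α → T} {h : α → M} {C : M} (hrcusp : IsRobustCumulative A σ p k h C)
    {b : α} {d : T} (hd : d ≤ k b) : IsCumulative A σ (p + Pi.single b d) h C := by
  intro t
  calc
    _ ≤ ∑ a ∈ executing A σ p t, h a + ∑ a ∈ executing A (σ + p) (Pi.single b d) t, h a :=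
      sum_executing_add_le ..
    _ ≤ ∑ a ∈ executing A σ p t, h a + (executing A (σ + p) k t).sup h :=
      add_le_add_right (sum_executing_single_le_sup A (σ + p) hd h t) _
    _ ≤ C := hrcusp t

end Cumulative

/-- Robustness semantics of RCuSP (absorption of one delay): if `σ` satisfies
the RCuSP constraint, then for every activity `b ∈ A` and every delay `d ≤ k b`,
the schedule in which `b` has duration `p b + d` and every other activity keeps
its duration satisfies the cumulative constraint. -/
theorem rcusp_absorbs_one_delay
    {α : Type*} [DecidableEq α] (A : Finset α) (p h k : α → ℕ) (C : ℕ)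
    (hp : ∀ a ∈ A, 0 < p a) (hh : ∀ a ∈ A, 0 < h a)
    (σ : α → ℕ)
    (hrcusp : ∀ t : ℕ,
      (∑ a ∈ A.filter (fun a => σ a ≤ t ∧ t < σ a + p a), h a)
        + (A.filter (fun b => σ b + p b ≤ t ∧ t < σ b + p b + k b)).sup h ≤ C) :
    ∀ b ∈ A, ∀ d : ℕ, d ≤ k b →
      ∀ t : ℕ,
        (∑ a ∈ A.filter
            (fun a => σ a ≤ t ∧ t < σ a + (p a + if a = b then d else 0)), h a) ≤ C := by
  intro b _ d hd t
  simpa only [executing, Pi.add_apply, Pi.single_apply] using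
    rcusp_absorbs_one_delay_general hrcusp hd t
end

section
/- Robustness semantics of RCuSP^r (absorption of r delays, subset formulation): Suppose an assignment σ : A → ℕ satisfies: for every t ∈ ℕ and every subset T of {b ∈ A : σ b + p b ≤ t < σ b + p b + k b} with |T| ≤ r, the sum of h a over all a ∈ A with σ a ≤ t < σ a + p a, plus the sum of h b over b ∈ T, is at most C. Then for every function d : A → ℕ with d a ≤ k a for all a ∈ A and with {a ∈ A : d a > 0} of cardinality at most r, the schedule in which every activity a has duration p a + d a satisfies the cumulative constraint: for every t ∈ ℕ, the sum of h a over all a ∈ A with σ a ≤ t < σ a + p a + d a is at most C. -/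
/-!
Fix a time `t` and admissible delays `d`. Cutting each delayed interval `[σ a, σ a + p a + d a)`
at `σ a + p a` splits the delayed load at `t` into the nominal load and the load of the set `T`
of activities running at `t` only because of their delay. Activities in `T` have positive delay,
so there are at most `r` of them, and `d ≤ k` puts `t` in their slack windows. Hence the robust
constraint applies to `T`, and its bound at `t` is the bound on the delayed load.
-/

section ActiveAt

variable {α τ : Type*} [LinearOrder τ] {A : Finset α}

/-- The activities of `A` whose half-open interval `[s a, e a)` contains the time `t`. The
endpoints are arbitrary functions, so that execution intervals, slack windows and delay windows
are all instances. -/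
def activeAt (A : Finset α) (s e : α → τ) (t : τ) : Finset α :=
  A.filter fun a => s a ≤ t ∧ t < e a

theorem activeAt_subset_activeAt_right {s e e' : α → τ} (he : ∀ a ∈ A, e a ≤ e' a) (t : τ) :
    activeAt A s e t ⊆ activeAt A s e' t := by
  intro a ha
  obtain ⟨haA, hs, hlt⟩ := Finset.mem_filter.mp ha
  exact Finset.mem_filter.mpr ⟨haA, hs, hlt.trans_le (he a haA)⟩

theorem activeAt_add_subset_filter_pos [AddZeroClass τ] [AddLeftMono τ] (s d : α → τ) (t : τ) :
    activeAt A s (fun a => s a + d a) t ⊆ A.filter fun a => 0 < d a := by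
  intro a ha
  obtain ⟨haA, hs, hlt⟩ := Finset.mem_filter.mp ha
  refine Finset.mem_filter.mpr ⟨haA, ?_⟩
  by_contra! hd
  exact (hs.trans_lt hlt).not_ge (add_le_of_nonpos_right hd)

theorem sum_activeAt_add_sum_activeAt {M : Type*} [AddCommMonoid M] {s m e : α → τ}
    (hsm : ∀ a ∈ A, s a ≤ m a) (hme : ∀ a ∈ A, m a ≤ e a) (f : α → M) (t : τ) :
    ∑ a ∈ activeAt A s m t, f a + ∑ a ∈ activeAt A m e t, f a = ∑ a ∈ activeAt A s e t, f a := by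
  have before_cut : (activeAt A s e t).filter (fun a => t < m a) = activeAt A s m t := by
    rw [activeAt, Finset.filter_filter]
    refine Finset.filter_congr fun a ha => ?_
    exact ⟨fun h => ⟨h.1.1, h.2⟩, fun h => ⟨⟨h.1, h.2.trans_le (hme a ha)⟩, h.2⟩⟩
  have after_cut : (activeAt A s e t).filter (fun a => ¬ t < m a) = activeAt A m e t := by
    rw [activeAt, Finset.filter_filter]
    refine Finset.filter_congr fun a ha => ?_
    rw [not_lt]
    exact ⟨fun h => ⟨h.2, h.1.2⟩, fun h => ⟨⟨(hsm a ha).trans h.1, h.2⟩, h.1⟩⟩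
  rw [← before_cut, ← after_cut, Finset.sum_filter_add_sum_filter_not]

end ActiveAt

theorem rcusp_r_absorbs_r_delays_general {α τ M : Type*}
    [LinearOrder τ] [AddZeroClass τ] [AddLeftMono τ] [AddCommMonoid M] [LE M]
    {A : Finset α} {σ p k d : α → τ} {h : α → M} {C : M} {r : ℕ}
    (hp : ∀ a ∈ A, 0 ≤ p a)
    (hsat : ∀ t : τ, ∀ T : Finset α,
      T ⊆ activeAt A (fun b => σ b + p b) (fun b => σ b + p b + k b) t →
      T.card ≤ r →
      ∑ a ∈ activeAt A σ (fun a => σ a + p a) t, h a + ∑ b ∈ T, h b ≤ C)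
    (hd : ∀ a ∈ A, 0 ≤ d a) (hdk : ∀ a ∈ A, d a ≤ k a)
    (hcard : (A.filter fun a => 0 < d a).card ≤ r) (t : τ) :
    ∑ a ∈ activeAt A σ (fun a => σ a + p a + d a) t, h a ≤ C := by
  let T := activeAt A (fun b => σ b + p b) (fun b => σ b + p b + d b) t
  have slack : T ⊆ activeAt A (fun b => σ b + p b) (fun b => σ b + p b + k b) t :=
    activeAt_subset_activeAt_right (fun a ha => by gcongr; exact hdk a ha) t
  have card_le : T.card ≤ r :=
    (Finset.card_le_card (activeAt_add_subset_filter_pos _ d t)).trans hcard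
  rw [← sum_activeAt_add_sum_activeAt (fun a ha => le_add_of_nonneg_right (hp a ha))
    (fun a ha => le_add_of_nonneg_right (hd a ha)) h t]
  exact hsat t T slack card_le

/-- Robustness semantics of RCuSP^r (absorption of `r` delays, subset
formulation): if for every time `t` and every subset `T` of at most `r`
activities whose slack window contains `t` the load at `t` plus the heights of
`T` fits in `C`, then for every delay function `d` bounded by the slacks and
positive on at most `r` activities, the schedule with durations `p a + d a`
satisfies the cumulative constraint. -/
theorem rcusp_r_absorbs_r_delays
    {α : Type*} [DecidableEq α] (A : Finset α) (p h k : α → ℕ) (C : ℕ) (r : ℕ)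
    (hp : ∀ a ∈ A, 0 < p a) (hh : ∀ a ∈ A, 0 < h a) (hr : 1 ≤ r)
    (σ : α → ℕ)
    (hsat : ∀ t : ℕ, ∀ T : Finset α,
      T ⊆ A.filter (fun b => σ b + p b ≤ t ∧ t < σ b + p b + k b) →
      T.card ≤ r →
      (∑ a ∈ A.filter (fun a => σ a ≤ t ∧ t < σ a + p a), h a)
        + (∑ b ∈ T, h b) ≤ C) :
    ∀ d : α → ℕ,
      (∀ a ∈ A, d a ≤ k a) →
      (A.filter (fun a => 0 < d a)).card ≤ r →
      ∀ t : ℕ,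
        (∑ a ∈ A.filter (fun a => σ a ≤ t ∧ t < σ a + p a + d a), h a) ≤ C :=
  fun _ hdk hcard => rcusp_r_absorbs_r_delays_general (fun _ _ => Nat.zero_le _) hsat
    (fun _ _ => Nat.zero_le _) hdk hcard
end
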